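/- Let 1/3 < λ < 1, let b, σ ∈ C_b^∞(ℝ;ℝ) with inf σ > 0, and for g ∈ C^λ₀([0,1];ℝ) and ξ ∈ ℝ let x_·(ξ,g) be the Doss–Sussmann solution. Let ℓ : [0,1] → ℝ be ℓ_t = t. Then there exist constants C₁, C₂ > 0, depending only on b and σ (not on g, ξ, t), such that for every g ∈ C^λ₀([0,1];ℝ), ξ ∈ ℝ, κ ∈ ℝ and t ∈ [0,1], the derivative (d/dκ) x_t(ξ, g + κℓ) exists and satisfies C₁·t ≤ (d/dκ) x_t(ξ, g + κℓ) ≤ C₂·t. In particular, for each t ∈ (0,1] the map κ ↦ x_t(ξ, g + κℓ) is a bijection from ℝ onto ℝ. -/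

import Mathlib

/-- `f` is in `C_b^∞(ℝ;ℝ)`. -/
def CbInf (f : ℝ → ℝ) : Prop :=
  ContDiff ℝ (⊤ : ℕ∞) f ∧ ∀ i : ℕ, ∃ M : ℝ, ∀ x : ℝ, |iteratedDeriv i f x| ≤ M

/-- `f_{σ,b}(x,y) = exp(−∫₀^y σ'(φ(x,η))dη) · b(φ(x,y))`. -/
noncomputable def fsb (b σ : ℝ → ℝ) (φ : ℝ → ℝ → ℝ) (x y : ℝ) : ℝ :=
  Real.exp (-(∫ η in (0:ℝ)..y, deriv σ (φ x η))) * b (φ x y)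

open Set Filter Topology MeasureTheory intervalIntegral

/-- A solution of an autonomous integral equation with bounded continuous vector field is
continuous; no integrability of the integrand is assumed. -/
lemma continuous_of_integral_eq {σ u : ℝ → ℝ} {α M : ℝ} (hσ : Continuous σ)
    (hM : ∀ x, |σ x| ≤ M) (hu : ∀ β, u β = α + ∫ η in (0:ℝ)..β, σ (u η)) :
    Continuous u := by
  set T : Set ℝ := {s | IntervalIntegrable (fun η => σ (u η)) volume 0 s} with hT
  have hconn : T.OrdConnected := by
    refine ⟨fun x hx y hy z hz => ?_⟩
    rcases le_total 0 z with h0 | h0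
    · exact IntervalIntegrable.mono_set hy (by
        rw [uIcc_of_le h0, uIcc_of_le (h0.trans hz.2)]; exact Icc_subset_Icc_right hz.2)
    · exact IntervalIntegrable.mono_set hx (by
        rw [uIcc_of_ge h0, uIcc_of_ge (hz.1.trans h0)]; exact Icc_subset_Icc_left hz.1)
  have hTm : MeasurableSet T := hconn.measurableSet
  have hlip : ∀ x ∈ T, ∀ y ∈ T, |u y - u x| ≤ M * |y - x| := by
    intro x hx y hy
    have : u y - u x = ∫ η in x..y, σ (u η) := by
      rw [hu y, hu x, ← integral_interval_sub_left hy hx]; ring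
    rw [this, ← Real.norm_eq_abs]
    exact norm_integral_le_of_norm_le_const fun z _ => hM _
  have hM0 : 0 ≤ M := (abs_nonneg _).trans (hM 0)
  have hcont : ContinuousOn u T := by
    refine (LipschitzOnWith.of_dist_le_mul (K := ⟨M, hM0⟩) fun x hx y hy => ?_).continuousOn
    rw [Real.dist_eq, Real.dist_eq]
    exact hlip y hy x hx
  have hae : AEMeasurable u volume := by
    rw [← Measure.restrict_univ (μ := (volume : Measure ℝ)), ← union_compl_self T]
    refine aemeasurable_union_iff.2 ⟨hcont.aemeasurable hTm, ?_⟩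
    refine AEMeasurable.congr (aemeasurable_const (b := α)) ?_
    filter_upwards [ae_restrict_mem hTm.compl] with s hs
    rw [hu s, integral_undef hs, add_zero]
  have hint : ∀ s, IntervalIntegrable (fun η => σ (u η)) volume 0 s := fun s => by
    refine (intervalIntegrable_const (c := M)).mono_fun
      (hσ.measurable.comp_aemeasurable hae).aestronglyMeasurable.restrict ?_
    refine Eventually.of_forall fun x => ?_
    simpa only [Real.norm_eq_abs, abs_of_nonneg hM0] using hM (u x)
  have : T = univ := eq_univ_of_forall hint
  rw [this] at hcont
  exact continuousOn_univ.1 hcont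

/-- The integral mean value factor `∫₀¹ h'(x + θ(y - x)) dθ`. -/
noncomputable def meanSlope (h' : ℝ → ℝ) (p : ℝ × ℝ) : ℝ :=
  ∫ θ in (0:ℝ)..1, h' (p.1 + θ * (p.2 - p.1))

lemma continuous_meanSlope {h' : ℝ → ℝ} (hc : Continuous h') : Continuous (meanSlope h') := by
  refine continuous_parametric_intervalIntegral_of_continuous' ?_ 0 1
  fun_prop

lemma meanSlope_self (h' : ℝ → ℝ) (x : ℝ) : meanSlope h' (x, x) = h' x := by
  simp [meanSlope]

lemma abs_meanSlope_le {h' : ℝ → ℝ} {L : ℝ} (hL : ∀ x, |h' x| ≤ L) (p : ℝ × ℝ) :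
    |meanSlope h' p| ≤ L := by
  have := norm_integral_le_of_norm_le_const (a := (0:ℝ)) (b := 1) (C := L)
    (f := fun θ => h' (p.1 + θ * (p.2 - p.1))) fun z _ => hL _
  simpa [meanSlope] using this

lemma meanSlope_mul {h h' : ℝ → ℝ} (hd : ∀ x, HasDerivAt h (h' x) x) (hc : Continuous h')
    (x y : ℝ) : meanSlope h' (x, y) * (y - x) = h y - h x := by
  have key : ∀ θ : ℝ, HasDerivAt (fun θ => h (x + θ * (y - x)))
      (h' (x + θ * (y - x)) * (y - x)) θ := fun θ => by
    have h1 : HasDerivAt (fun θ : ℝ => x + θ * (y - x)) (y - x) θ := by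
      simpa using ((hasDerivAt_id θ).mul_const (y - x)).const_add x
    exact (hd _).comp θ h1
  have := integral_eq_sub_of_hasDerivAt (a := (0:ℝ)) (b := 1) (fun θ _ => key θ)
    (Continuous.intervalIntegrable (by fun_prop) _ _)
  rw [intervalIntegral.integral_mul_const] at this
  simpa [meanSlope] using this

/-- Integrating-factor formula for the scalar linear equation `d' = q d + k`, `d 0 = 0`. -/
lemma mul_exp_eq_of_linear_integral_eq {q d : ℝ → ℝ} {k : ℝ} (hq : Continuous q)
    (hd : Continuous d)
    (heq : ∀ t ∈ Icc (0:ℝ) 1, d t = (∫ u in (0:ℝ)..t, q u * d u) + k * t)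
    {t : ℝ} (ht : t ∈ Icc (0:ℝ) 1) :
    d t * Real.exp (-∫ u in (0:ℝ)..t, q u)
      = k * ∫ s in (0:ℝ)..t, Real.exp (-∫ u in (0:ℝ)..s, q u) := by
  set E : ℝ → ℝ := fun s => Real.exp (-∫ u in (0:ℝ)..s, q u) with hE
  have hEd : ∀ s, HasDerivAt E (E s * (-q s)) s := fun s =>
    ((hq.integral_hasStrictDerivAt 0 s).hasDerivAt.neg).exp
  have hEc : Continuous E := continuous_iff_continuousAt.2 fun s => (hEd s).continuousAt
  set d' : ℝ → ℝ := fun t => (∫ u in (0:ℝ)..t, q u * d u) + k * t with hd'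
  have hd'd : ∀ s, HasDerivAt d' (q s * d s + k) s := fun s => by
    have h1 := ((hq.mul hd).integral_hasStrictDerivAt 0 s).hasDerivAt
    have h2 : HasDerivAt (fun t : ℝ => k * t) k s := by
      simpa using (hasDerivAt_id s).const_mul k
    exact h1.add h2
  set F : ℝ → ℝ := fun t => d' t * E t - k * ∫ s in (0:ℝ)..t, E s with hF
  have hFd : ∀ s, HasDerivAt F ((q s * d s + k) * E s + d' s * (E s * (-q s)) - k * E s) s :=
    fun s => ((hd'd s).mul (hEd s)).sub
      ((hEc.integral_hasStrictDerivAt 0 s).hasDerivAt.const_mul k)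
  have hconst := constant_of_has_deriv_right_zero (f := F) (a := 0) (b := 1)
    (fun s _ => (hFd s).continuousAt.continuousWithinAt) (fun s hs => by
      have h := (hFd s).hasDerivWithinAt (s := Ici s)
      have e : d' s = d s := (heq s (Ico_subset_Icc_self hs)).symm
      rw [e] at h
      convert h using 1
      ring) t ht
  have e : d' t = d t := (heq t ht).symm
  simp only [hF, e] at hconst
  simp [hd'] at hconst
  linarith

lemma exp_neg_integral_mem {q : ℝ → ℝ} {L : ℝ} (hL : ∀ u, |q u| ≤ L) (hq : Continuous q)
    {s t : ℝ} (hs : 0 ≤ s) (hst : s ≤ t) (ht : t ≤ 1) :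
    Real.exp (-L) ≤ Real.exp (-∫ u in (0:ℝ)..s, q u) / Real.exp (-∫ u in (0:ℝ)..t, q u) ∧
    Real.exp (-∫ u in (0:ℝ)..s, q u) / Real.exp (-∫ u in (0:ℝ)..t, q u) ≤ Real.exp L := by
  have hL0 : 0 ≤ L := (abs_nonneg _).trans (hL 0)
  have h1 : -(∫ u in (0:ℝ)..s, q u) - -(∫ u in (0:ℝ)..t, q u) = ∫ u in s..t, q u := by
    rw [← integral_interval_sub_left (hq.intervalIntegrable 0 t) (hq.intervalIntegrable 0 s)]
    ring
  have h2 : |∫ u in s..t, q u| ≤ L := by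
    have := norm_integral_le_of_norm_le_const (a := s) (b := t) (C := L) (f := q) fun z _ => hL _
    rw [Real.norm_eq_abs, abs_of_nonneg (sub_nonneg.2 hst)] at this
    nlinarith
  rw [← Real.exp_sub, h1, Real.exp_le_exp, Real.exp_le_exp]
  exact abs_le.1 h2

/-- Dependence on the slope `κ` for an additively driven scalar equation. -/
lemma exists_hasDerivAt_of_additive_eq {h h' G : ℝ → ℝ} {L z : ℝ} {Y : ℝ → ℝ → ℝ}
    (hd : ∀ x, HasDerivAt h (h' x) x) (hc : Continuous h') (hL : ∀ x, |h' x| ≤ L)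
    (hY : ∀ κ, Continuous (Y κ))
    (heq : ∀ κ, ∀ t ∈ Icc (0:ℝ) 1, Y κ t = z + (∫ u in (0:ℝ)..t, h (Y κ u)) + (G t + κ * t))
    (κ : ℝ) {t : ℝ} (ht : t ∈ Icc (0:ℝ) 1) :
    ∃ D, HasDerivAt (fun κ' => Y κ' t) D κ ∧ Real.exp (-L) * t ≤ D ∧ D ≤ Real.exp L * t := by
  have hhc : Continuous h := continuous_iff_continuousAt.2 fun s => (hd s).continuousAt
  set q : ℝ → ℝ → ℝ := fun κ' u => meanSlope h' (Y κ u, Y κ' u) with hq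
  have hqc : ∀ κ', Continuous (q κ') := fun κ' =>
    (continuous_meanSlope hc).comp ((hY κ).prodMk (hY κ'))
  have hqL : ∀ κ' u, |q κ' u| ≤ L := fun κ' u => abs_meanSlope_le hL _
  set E : ℝ → ℝ → ℝ := fun κ' s => Real.exp (-∫ u in (0:ℝ)..s, q κ' u) with hE
  have hEc : ∀ κ', Continuous (E κ') := fun κ' =>
    (continuous_primitive (fun a b => (hqc κ').intervalIntegrable a b) 0).neg.rexp
  set R : ℝ → ℝ → ℝ := fun κ' r => (∫ s in (0:ℝ)..r, E κ' s) / E κ' r with hR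
  have hform : ∀ κ', ∀ r ∈ Icc (0:ℝ) 1, Y κ' r - Y κ r = (κ' - κ) * R κ' r := by
    intro κ' r hr
    have := mul_exp_eq_of_linear_integral_eq (hqc κ') ((hY κ').sub (hY κ)) (k := κ' - κ)
      (fun s hs => by
        have e : ∀ u, q κ' u * (Y κ' - Y κ) u = h (Y κ' u) - h (Y κ u) := fun u =>
          meanSlope_mul hd hc _ _
        simp only [e]
        have hi : ∀ k, IntervalIntegrable (fun u => h (Y k u)) volume 0 s := fun k =>
          (hhc.comp (hY k)).intervalIntegrable _ _
        rw [intervalIntegral.integral_sub (hi κ') (hi κ), Pi.sub_apply, heq κ' s hs, heq κ s hs]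
        ring) hr
    rw [hR, mul_div_assoc', eq_div_iff (Real.exp_ne_zero _)]
    exact this
  have hRb : ∀ κ', ∀ r ∈ Icc (0:ℝ) 1, Real.exp (-L) * r ≤ R κ' r ∧ R κ' r ≤ Real.exp L * r := by
    intro κ' r hr
    have e : R κ' r = ∫ s in (0:ℝ)..r, E κ' s / E κ' r := by simp [hR]
    have ii : IntervalIntegrable (fun s => E κ' s / E κ' r) volume 0 r :=
      ((hEc κ').div_const _).intervalIntegrable _ _
    have hb : ∀ s ∈ Icc 0 r, Real.exp (-L) ≤ E κ' s / E κ' r ∧ E κ' s / E κ' r ≤ Real.exp L :=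
      fun s hs => exp_neg_integral_mem (hqL κ') (hqc κ') hs.1 hs.2 hr.2
    rw [e]
    constructor
    · have := integral_mono_on hr.1 (intervalIntegrable_const (c := Real.exp (-L))) ii
        fun s hs => (hb s hs).1
      simpa [mul_comm] using this
    · have := integral_mono_on hr.1 ii (intervalIntegrable_const (c := Real.exp L))
        fun s hs => (hb s hs).2
      simpa [mul_comm] using this
  have hYt : ∀ r ∈ Icc (0:ℝ) 1, Tendsto (fun κ' => Y κ' r) (𝓝[≠] κ) (𝓝 (Y κ r)) := by
    intro r hr
    rw [tendsto_iff_dist_tendsto_zero]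
    have hlim : Tendsto (fun κ' => |κ' - κ| * Real.exp L) (𝓝[≠] κ) (𝓝 0) := by
      have : Continuous fun κ' => |κ' - κ| * Real.exp L := by fun_prop
      simpa using (this.tendsto κ).mono_left nhdsWithin_le_nhds
    refine squeeze_zero (fun _ => dist_nonneg) (fun κ' => ?_) hlim
    rw [Real.dist_eq, hform κ' r hr, abs_mul]
    have h0 : 0 ≤ R κ' r := (mul_nonneg (Real.exp_pos _).le hr.1).trans (hRb κ' r hr).1
    rw [abs_of_nonneg h0]
    refine mul_le_mul_of_nonneg_left ((hRb κ' r hr).2.trans ?_) (abs_nonneg _)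
    exact mul_le_of_le_one_right (Real.exp_pos _).le hr.2
  have hsub : ∀ r ∈ Icc (0:ℝ) 1, ∀ u ∈ uIoc 0 r, u ∈ Icc (0:ℝ) 1 := fun r hr u hu => by
    rw [uIoc_of_le hr.1] at hu
    exact ⟨hu.1.le, hu.2.trans hr.2⟩
  have hEt : ∀ r ∈ Icc (0:ℝ) 1, Tendsto (fun κ' => E κ' r) (𝓝[≠] κ) (𝓝 (E κ r)) := by
    intro r hr
    refine (Real.continuous_exp.tendsto _).comp (Tendsto.neg ?_)
    refine tendsto_integral_filter_of_dominated_convergence (fun _ => L)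
      (Eventually.of_forall fun κ' => (hqc κ').aestronglyMeasurable.restrict)
      (Eventually.of_forall fun κ' => Eventually.of_forall fun u _ => hqL κ' u)
      intervalIntegrable_const (Eventually.of_forall fun u hu => ?_)
    exact ((continuous_meanSlope hc).tendsto _).comp
      (tendsto_const_nhds.prodMk_nhds (hYt u (hsub r hr u hu)))
  have hEb : ∀ κ', ∀ s ∈ Icc (0:ℝ) 1, E κ' s ≤ Real.exp L := fun κ' s hs => by
    have h1 := norm_integral_le_of_norm_le_const (a := (0:ℝ)) (b := s) (C := L) (f := q κ')
      fun z _ => hqL κ' z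
    rw [sub_zero, abs_of_nonneg hs.1, Real.norm_eq_abs] at h1
    have hL0 : 0 ≤ L := (abs_nonneg _).trans (hL 0)
    refine Real.exp_le_exp.2 ((neg_le_abs _).trans (h1.trans ?_))
    exact mul_le_of_le_one_right hL0 hs.2
  have hRt : Tendsto (fun κ' => R κ' t) (𝓝[≠] κ) (𝓝 (R κ t)) := by
    refine Tendsto.div ?_ (hEt t ht) (Real.exp_ne_zero _)
    refine tendsto_integral_filter_of_dominated_convergence (fun _ => Real.exp L)
      (Eventually.of_forall fun κ' => (hEc κ').aestronglyMeasurable.restrict)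
      (Eventually.of_forall fun κ' => Eventually.of_forall fun u hu => ?_)
      intervalIntegrable_const
      (Eventually.of_forall fun u hu => hEt u (hsub t ht u hu))
    rw [Real.norm_eq_abs, abs_of_pos (Real.exp_pos _)]
    exact hEb κ' u (hsub t ht u hu)
  refine ⟨R κ t, ?_, (hRb κ t ht).1, (hRb κ t ht).2⟩
  rw [hasDerivAt_iff_tendsto_slope]
  refine hRt.congr' ?_
  filter_upwards [self_mem_nhdsWithin] with κ' hκ
  rw [slope_def_field, hform κ' t ht, mul_div_cancel_left₀ _ (sub_ne_zero.2 hκ)]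

lemma bijective_of_hasDerivAt_ge {f : ℝ → ℝ} {c : ℝ} (hc : 0 < c)
    (hf : ∀ x, ∃ D, HasDerivAt f D x ∧ c ≤ D) : Function.Bijective f := by
  choose D hD hcD using hf
  have hmono : Monotone fun x => f x - c * x := by
    have hd : ∀ x, HasDerivAt (fun x => f x - c * x) (D x - c) x := fun x => by
      simpa only [mul_one] using! (hD x).sub ((hasDerivAt_id x).const_mul c)
    refine monotone_of_deriv_nonneg (fun x => (hd x).differentiableAt) fun x => ?_
    rw [(hd x).deriv]
    exact sub_nonneg.2 (hcD x)
  constructor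
  · refine StrictMono.injective fun x y hxy => ?_
    have := hmono hxy.le
    have := mul_lt_mul_of_pos_left hxy hc
    simp only at *
    linarith
  · refine Continuous.surjective
      (continuous_iff_continuousAt.2 fun x => (hD x).continuousAt) ?_ ?_
    · refine tendsto_atTop_mono' _ ?_
        (tendsto_atTop_add_const_left _ (f 0) (tendsto_id.const_mul_atTop hc))
      filter_upwards [eventually_ge_atTop 0] with x hx
      have := hmono hx
      simp only [mul_zero, sub_zero, id] at *
      linarith
    · refine tendsto_atBot_mono' _ ?_
        (tendsto_atBot_add_const_left _ (f 0) (tendsto_id.const_mul_atBot hc))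
      filter_upwards [eventually_le_atBot 0] with x hx
      have := hmono hx
      simp only [mul_zero, sub_zero, id] at *
      linarith

/-- The Lamperti transform `x ↦ ∫₀ˣ 1/σ`. -/
noncomputable def lamperti (σ : ℝ → ℝ) (x : ℝ) : ℝ := ∫ s in (0:ℝ)..x, (σ s)⁻¹

lemma hasDerivAt_lamperti {σ : ℝ → ℝ} (hσ : Continuous σ) (h0 : ∀ x, 0 < σ x) (x : ℝ) :
    HasDerivAt (lamperti σ) (σ x)⁻¹ x :=
  ((hσ.inv₀ fun y => (h0 y).ne').integral_hasStrictDerivAt 0 x).hasDerivAt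

lemma lamperti_injective {σ : ℝ → ℝ} (hσ : Continuous σ) (h0 : ∀ x, 0 < σ x) :
    Function.Injective (lamperti σ) := by
  refine (strictMono_of_deriv_pos fun x => ?_).injective
  rw [(hasDerivAt_lamperti hσ h0 x).deriv]
  exact inv_pos.2 (h0 x)

lemma lamperti_flow {σ u : ℝ → ℝ} (hσ : Continuous σ) (h0 : ∀ x, 0 < σ x)
    (hu : ∀ β, HasDerivAt u (σ (u β)) β) (β : ℝ) :
    lamperti σ (u β) = lamperti σ (u 0) + β := by
  have hd : ∀ β, HasDerivAt (fun β => lamperti σ (u β) - β) 0 β := fun β => by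
    have := ((hasDerivAt_lamperti hσ h0 (u β)).comp β (hu β)).sub (hasDerivAt_id β)
    rwa [inv_mul_cancel₀ (h0 _).ne', sub_self] at this
  have := is_const_of_deriv_eq_zero (fun x => (hd x).differentiableAt) (fun x => (hd x).deriv) β 0
  simp only [sub_zero] at this
  linarith

/-- Along a flow line of `σ > 0` the exponential weight is a quotient of values of `σ`. -/
lemma exp_neg_integral_deriv_flow {σ u : ℝ → ℝ} (hσ : ContDiff ℝ 1 σ) (h0 : ∀ x, 0 < σ x)
    (hu : ∀ β, HasDerivAt u (σ (u β)) β) (β : ℝ) :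
    Real.exp (-∫ η in (0:ℝ)..β, deriv σ (u η)) = σ (u 0) / σ (u β) := by
  have huc : Continuous u := continuous_iff_continuousAt.2 fun s => (hu s).continuousAt
  have hd : ∀ β, HasDerivAt (fun β => Real.log (σ (u β))) (deriv σ (u β)) β := fun β => by
    have h1 := ((hσ.differentiable one_ne_zero (u β)).hasDerivAt.comp β (hu β)).log (h0 _).ne'
    simpa [Function.comp_def, (h0 (u β)).ne'] using h1
  rw [integral_eq_sub_of_hasDerivAt (fun x _ => hd x)
    (((hσ.continuous_deriv le_rfl).comp huc).intervalIntegrable _ _), neg_sub, Real.exp_sub,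
    Real.exp_log (h0 _), Real.exp_log (h0 _)]

lemma CbInf.contDiff_one {f : ℝ → ℝ} (hf : CbInf f) : ContDiff ℝ 1 f :=
  hf.1.of_le (by exact_mod_cast le_top)

lemma CbInf.exists_abs_le {f : ℝ → ℝ} (hf : CbInf f) : ∃ M, ∀ x, |f x| ≤ M := by
  simpa using hf.2 0

lemma CbInf.exists_abs_deriv_le {f : ℝ → ℝ} (hf : CbInf f) : ∃ M, ∀ x, |deriv f x| ≤ M := by
  simpa using hf.2 1

/-- Change of variables `y = lamperti σ a + g` in the integral equation of the auxiliary path. -/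
lemma lamperti_add_eq {σ h a g : ℝ → ℝ} {ξ : ℝ} (hσ : Continuous σ) (h0 : ∀ x, 0 < σ x)
    (hh : Continuous h) (ha : ContinuousOn a (Icc 0 1)) (hg : ContinuousOn g (Icc 0 1))
    (heq : ∀ t ∈ Icc (0:ℝ) 1,
      a t = ξ + ∫ u in (0:ℝ)..t, σ (a u) * h (lamperti σ (a u) + g u)) :
    ∃ y : ℝ → ℝ, Continuous y ∧ (∀ t ∈ Icc (0:ℝ) 1, y t = lamperti σ (a t) + g t) ∧
      ∀ t ∈ Icc (0:ℝ) 1, y t = lamperti σ ξ + (∫ u in (0:ℝ)..t, h (y u)) + g t := by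
  have hlc : Continuous (lamperti σ) :=
    continuous_iff_continuousAt.2 fun s => (hasDerivAt_lamperti hσ h0 s).continuousAt
  set a' : ℝ → ℝ := IccExtend zero_le_one ((Icc (0:ℝ) 1).domRestrict a) with ha'
  set g' : ℝ → ℝ := IccExtend zero_le_one ((Icc (0:ℝ) 1).domRestrict g) with hg'
  have ha'c : Continuous a' := (continuousOn_iff_continuous_domRestrict.1 ha).Icc_extend'
  have hg'c : Continuous g' := (continuousOn_iff_continuous_domRestrict.1 hg).Icc_extend'
  have ea : ∀ t ∈ Icc (0:ℝ) 1, a' t = a t := fun t ht => IccExtend_of_mem _ _ ht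
  have eg : ∀ t ∈ Icc (0:ℝ) 1, g' t = g t := fun t ht => IccExtend_of_mem _ _ ht
  set w : ℝ → ℝ := fun u => σ (a' u) * h (lamperti σ (a' u) + g' u) with hw
  have hwc : Continuous w := by fun_prop
  refine ⟨fun t => lamperti σ (a' t) + g' t, by fun_prop,
    fun t ht => by simp only [ea t ht, eg t ht], fun t ht => ?_⟩
  set v : ℝ → ℝ := fun t => ξ + ∫ u in (0:ℝ)..t, w u with hv
  have ev : ∀ s ∈ Icc (0:ℝ) 1, v s = a' s := fun s hs => by
    rw [ea s hs, heq s hs, hv]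
    simp only [add_right_inj]
    refine integral_congr fun u hu => ?_
    rw [uIcc_of_le hs.1] at hu
    have hu' : u ∈ Icc (0:ℝ) 1 := ⟨hu.1, hu.2.trans hs.2⟩
    simp only [hw, ea u hu', eg u hu']
  have hd : ∀ s ∈ uIcc 0 t, HasDerivAt (fun s => lamperti σ (v s))
      (h (lamperti σ (a' s) + g' s)) s := fun s hs => by
    rw [uIcc_of_le ht.1] at hs
    have hs' : s ∈ Icc (0:ℝ) 1 := ⟨hs.1, hs.2.trans ht.2⟩
    have h1 := (hasDerivAt_lamperti hσ h0 (v s)).comp s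
      ((hwc.integral_hasStrictDerivAt 0 s).hasDerivAt.const_add ξ)
    rw [ev s hs', hw] at h1
    simp only [inv_mul_cancel_left₀ (h0 (a' s)).ne'] at h1
    exact h1
  have hint := integral_eq_sub_of_hasDerivAt hd
    (Continuous.intervalIntegrable (by fun_prop) _ _)
  have hv0 : v 0 = ξ := by simp [hv]
  rw [hv0, ev t ht] at hint
  rw [hint, ← eg t ht]
  ring


theorem stmt14
    (lam : ℝ) (hlam1 : 1/3 < lam) (hlam2 : lam < 1)
    (b σ : ℝ → ℝ) (hb : CbInf b) (hσ : CbInf σ)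
    (hσpos : ∃ c : ℝ, 0 < c ∧ ∀ x : ℝ, c ≤ σ x)
    (φ : ℝ → ℝ → ℝ) (hφ : ∀ α β : ℝ, φ α β = α + ∫ η in (0:ℝ)..β, σ (φ α η))
    -- `A ξ g` is the Doss–Sussmann auxiliary path for initial value `ξ` and driver `g`,
    -- so that `x_t(ξ,g) = φ(A ξ g t, g t)`
    (A : ℝ → (ℝ → ℝ) → ℝ → ℝ)
    (hA : ∀ (ξ : ℝ) (g : ℝ → ℝ), ContinuousOn g (Set.Icc 0 1) → g 0 = 0 →
      ContinuousOn (A ξ g) (Set.Icc 0 1) ∧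
      ∀ t ∈ Set.Icc (0:ℝ) 1, A ξ g t = ξ + ∫ u in (0:ℝ)..t, fsb b σ φ (A ξ g u) (g u)) :
    ∃ C₁ : ℝ, 0 < C₁ ∧ ∃ C₂ : ℝ, 0 < C₂ ∧
      ∀ g : ℝ → ℝ,
        (∃ Cg : ℝ, ∀ s ∈ Set.Icc (0:ℝ) 1, ∀ t ∈ Set.Icc (0:ℝ) 1,
          |g t - g s| ≤ Cg * |t - s| ^ lam) → g 0 = 0 →
        ∀ ξ : ℝ,
          (∀ κ : ℝ, ∀ t ∈ Set.Icc (0:ℝ) 1, ∃ D : ℝ,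
            HasDerivAt
              (fun κ' : ℝ => φ (A ξ (fun u => g u + κ' * u) t) (g t + κ' * t)) D κ ∧
            C₁ * t ≤ D ∧ D ≤ C₂ * t) ∧
          (∀ t : ℝ, 0 < t → t ≤ 1 →
            Function.Bijective
              (fun κ : ℝ => φ (A ξ (fun u => g u + κ * u) t) (g t + κ * t))) := by
  obtain ⟨c, hc, hcσ⟩ := hσpos
  have h0 : ∀ x, 0 < σ x := fun x => hc.trans_le (hcσ x)
  obtain ⟨Mσ, hMσ⟩ := hσ.exists_abs_le
  obtain ⟨Mσ', hMσ'⟩ := hσ.exists_abs_deriv_le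
  obtain ⟨Mb, hMb⟩ := hb.exists_abs_le
  obtain ⟨Mb', hMb'⟩ := hb.exists_abs_deriv_le
  have hσ1 := hσ.contDiff_one
  have hb1 := hb.contDiff_one
  have hσc := hσ1.continuous
  have hφc : ∀ α, Continuous (φ α) := fun α => continuous_of_integral_eq hσc hMσ (hφ α)
  have hφ0 : ∀ α, φ α 0 = α := fun α => by simpa using hφ α 0
  have hφd : ∀ α β, HasDerivAt (φ α) (σ (φ α β)) β := fun α β => by
    have h1 := ((hσc.comp (hφc α)).integral_hasStrictDerivAt 0 β).hasDerivAt.const_add α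
    exact h1.congr_of_eventuallyEq (Eventually.of_forall (hφ α))
  set K : ℝ → ℝ := φ 0 with hK
  have hKc : Continuous K := hφc 0
  have hφK : ∀ α β, φ α β = K (lamperti σ α + β) := fun α β => by
    refine lamperti_injective hσc h0 ?_
    rw [lamperti_flow hσc h0 (hφd α), lamperti_flow hσc h0 (hφd 0), hφ0, hφ0]
    simp [lamperti]
  set h : ℝ → ℝ := fun y => b (K y) / σ (K y) with hh
  set h' : ℝ → ℝ := fun y => deriv b (K y) - b (K y) * deriv σ (K y) / σ (K y) with hh'
  have hd : ∀ y, HasDerivAt h (h' y) y := fun y => by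
    have h1 := (hb1.differentiable one_ne_zero (K y)).hasDerivAt.comp y (hφd 0 y)
    have h2 := (hσ1.differentiable one_ne_zero (K y)).hasDerivAt.comp y (hφd 0 y)
    have hne : σ (K y) ≠ 0 := (h0 _).ne'
    refine (h1.div h2 hne).congr_deriv ?_
    simp only [hh', Function.comp_apply, ← hK]
    field_simp
  have hhc : Continuous h := continuous_iff_continuousAt.2 fun s => (hd s).continuousAt
  have hh'c : Continuous h' := by
    have h1 := (hb1.continuous_deriv le_rfl).comp hKc
    have h2 := (hσ1.continuous_deriv le_rfl).comp hKc
    exact h1.sub (((hb1.continuous.comp hKc).mul h2).div (hσc.comp hKc) fun y => (h0 _).ne')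
  set L : ℝ := Mb' + Mb * Mσ' / c with hL
  have hMb0 : 0 ≤ Mb := (abs_nonneg _).trans (hMb 0)
  have hMσ'0 : 0 ≤ Mσ' := (abs_nonneg _).trans (hMσ' 0)
  have hh'L : ∀ y, |h' y| ≤ L := fun y => by
    refine (abs_sub _ _).trans (add_le_add (hMb' _) ?_)
    rw [abs_div, abs_mul, abs_of_pos (h0 _)]
    exact div_le_div₀ (mul_nonneg hMb0 hMσ'0)
      (mul_le_mul (hMb _) (hMσ' _) (abs_nonneg _) hMb0) hc (hcσ _)
  have hfsb : ∀ x y, fsb b σ φ x y = σ x * h (lamperti σ x + y) := fun x y => by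
    rw [fsb, exp_neg_integral_deriv_flow hσ1 h0 (hφd x), hφ0, hφK x y]
    simp only [hh]
    ring
  have hMσ0 : 0 < Mσ := (h0 0).trans_le ((le_abs_self _).trans (hMσ 0))
  refine ⟨c * Real.exp (-L), by positivity, Mσ * Real.exp L, by positivity, ?_⟩
  rintro g ⟨Cg, hCg⟩ hg0 ξ
  have hgc : ContinuousOn g (Icc 0 1) := by
    intro s hs
    rw [ContinuousWithinAt, tendsto_iff_dist_tendsto_zero]
    have hlim : Tendsto (fun t => Cg * |t - s| ^ lam) (𝓝[Icc 0 1] s) (𝓝 0) := by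
      have hcont : Continuous fun t : ℝ => Cg * |t - s| ^ lam :=
        continuous_const.mul ((by fun_prop : Continuous fun t : ℝ => |t - s|).rpow_const
          fun _ => Or.inr (by linarith))
      have h1 := (hcont.tendsto s).mono_left (nhdsWithin_le_nhds (s := Icc 0 1))
      simpa [Real.zero_rpow (by linarith : lam ≠ 0)] using h1
    refine squeeze_zero' (Eventually.of_forall fun _ => dist_nonneg) ?_ hlim
    filter_upwards [self_mem_nhdsWithin] with t ht
    exact hCg s hs t ht
  have hex : ∀ κ : ℝ, ∃ y : ℝ → ℝ, Continuous y ∧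
      (∀ t ∈ Icc (0:ℝ) 1, y t = lamperti σ (A ξ (fun u => g u + κ * u) t) + (g t + κ * t)) ∧
      ∀ t ∈ Icc (0:ℝ) 1, y t = lamperti σ ξ + (∫ u in (0:ℝ)..t, h (y u)) + (g t + κ * t) := by
    intro κ
    have hgκ : ContinuousOn (fun u => g u + κ * u) (Icc 0 1) := by fun_prop
    obtain ⟨hAc, hAe⟩ := hA ξ (fun u => g u + κ * u) hgκ (by simp [hg0])
    simp only [hfsb] at hAe
    exact lamperti_add_eq hσc h0 hhc hAc hgκ hAe
  choose Y hYc hYA hYe using hex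
  have main : ∀ κ : ℝ, ∀ t ∈ Icc (0:ℝ) 1, ∃ D : ℝ,
      HasDerivAt (fun κ' : ℝ => φ (A ξ (fun u => g u + κ' * u) t) (g t + κ' * t)) D κ ∧
      c * Real.exp (-L) * t ≤ D ∧ D ≤ Mσ * Real.exp L * t := by
    intro κ t ht
    obtain ⟨D, hD, hD1, hD2⟩ := exists_hasDerivAt_of_additive_eq hd hh'c hh'L hYc hYe κ ht
    have hfun : (fun κ' : ℝ => φ (A ξ (fun u => g u + κ' * u) t) (g t + κ' * t))
        = fun κ' => K (Y κ' t) := funext fun κ' => by rw [hφK, hYA κ' t ht]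
    have hpos : 0 ≤ Real.exp (-L) * t := mul_nonneg (Real.exp_pos _).le ht.1
    refine ⟨σ (K (Y κ t)) * D, ?_, ?_, ?_⟩
    · rw [hfun]
      exact (hφd 0 (Y κ t)).comp κ hD
    · rw [mul_assoc]
      exact mul_le_mul (hcσ _) hD1 hpos (h0 _).le
    · rw [mul_assoc]
      exact mul_le_mul ((le_abs_self _).trans (hMσ _)) hD2 (hpos.trans hD1) hMσ0.le
  refine ⟨main, fun t ht0 ht1 => ?_⟩
  refine bijective_of_hasDerivAt_ge (c := c * Real.exp (-L) * t) (by positivity) fun κ => ?_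
  obtain ⟨D, hD, hD1, -⟩ := main κ t ⟨ht0.le, ht1⟩
  exact ⟨D, hD, hD1⟩
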